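/- Let k ≥ 1. For all distinct u, v ∈ ℕ and for every choice of X ∈ {R_k, T_k} and Y ∈ {R_k, T_k}, there exists w ∈ ℕ with (u,w) ∈ X and (v,w) ∈ Y. -/

import Mathlib

/-- For `k ≥ 1`, the relation `R_k ⊆ ℕ × ℕ`: `(u,v) ∈ R_k` iff
`v = 2^u·3^j` or `v = 2^j·3^u` for some `j`, or `u = 2^v·3^j` or `u = 2^j·3^v`
for some `j`, or `u = 2^v·5^k`. -/
def Rk (k : ℕ) : Set (ℕ × ℕ) :=
  {p | (∃ j : ℕ, p.2 = 2 ^ p.1 * 3 ^ j ∨ p.2 = 2 ^ j * 3 ^ p.1) ∨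
       (∃ j : ℕ, p.1 = 2 ^ p.2 * 3 ^ j ∨ p.1 = 2 ^ j * 3 ^ p.2) ∨
       p.1 = 2 ^ p.2 * 5 ^ k}

/-- `T_k = (ℕ × ℕ) ∖ R_k`. -/
def Tk (k : ℕ) : Set (ℕ × ℕ) := (Rk k)ᶜ

/-!
Once `v ≤ w`, the clauses of `R_k` that express `v` in terms of `w` cannot hold: they would force
`v ≥ 2 ^ w > w` or `v ≥ 3 ^ w > w`. So `(v, w) ∈ R_k` means that `w = 2 ^ a * 3 ^ b` with
`v ∈ {a, b}`, and unique factorization makes the witnesses explicit: `2 ^ u * 3 ^ v` is related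
to both `u` and `v`, `2 ^ u * 3 ^ (v + 1)` to `u` but not to `v`, and `5 * (u + v)` to neither.
-/

theorem lt_pow_self_mul {b c : ℕ} (hb : 1 < b) (hc : 0 < c) (n : ℕ) : n < b ^ n * c :=
  (Nat.lt_pow_self hb).trans_le (Nat.le_mul_of_pos_right _ hc)

theorem exponent_le_of_pow_mul_pow_eq {p q a b c d : ℕ} (hp : 1 < p) (hpq : p.Coprime q)
    (h : p ^ a * q ^ b = p ^ c * q ^ d) : a ≤ c := by
  have hdvd : p ^ a ∣ p ^ c * q ^ d := Dvd.intro _ h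
  exact (Nat.pow_dvd_pow_iff_le_right hp).1 ((hpq.pow a d).dvd_of_dvd_mul_right hdvd)

theorem pow_mul_pow_inj_of_coprime {p q a b c d : ℕ} (hp : 1 < p) (hq : 1 < q)
    (hpq : p.Coprime q) : p ^ a * q ^ b = p ^ c * q ^ d ↔ a = c ∧ b = d := by
  refine ⟨fun h => ?_, by rintro ⟨rfl, rfl⟩; rfl⟩
  have h' : q ^ b * p ^ a = q ^ d * p ^ c := by rwa [mul_comm, mul_comm (q ^ d)]
  exact ⟨(exponent_le_of_pow_mul_pow_eq hp hpq h).antisymm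
      (exponent_le_of_pow_mul_pow_eq hp hpq h.symm),
    (exponent_le_of_pow_mul_pow_eq hq hpq.symm h').antisymm
      (exponent_le_of_pow_mul_pow_eq hq hpq.symm h'.symm)⟩

section Rk

variable {k v w : ℕ}

theorem mem_rk_iff_of_le (hvw : v ≤ w) :
    (v, w) ∈ Rk k ↔ ∃ j, w = 2 ^ v * 3 ^ j ∨ w = 2 ^ j * 3 ^ v := by
  have ne_pow_mul {b c : ℕ} (hb : 1 < b) (hc : 0 < c) : v ≠ b ^ w * c :=
    (hvw.trans_lt (lt_pow_self_mul hb hc w)).ne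
  refine ⟨?_, Or.inl⟩
  rintro (h | ⟨j, h | h⟩ | h)
  · exact h
  · exact absurd h (ne_pow_mul one_lt_two (by positivity))
  · exact absurd (h.trans (mul_comm _ _)) (ne_pow_mul (by norm_num) (by positivity))
  · exact absurd h (ne_pow_mul one_lt_two (by positivity))

theorem two_pow_mul_three_pow_mem_rk_iff {a b : ℕ} (hv : v ≤ 2 ^ a * 3 ^ b) :
    (v, 2 ^ a * 3 ^ b) ∈ Rk k ↔ v = a ∨ v = b := by
  have inj {c d : ℕ} : 2 ^ a * 3 ^ b = 2 ^ c * 3 ^ d ↔ a = c ∧ b = d :=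
    pow_mul_pow_inj_of_coprime one_lt_two (by norm_num) (by norm_num)
  simp only [mem_rk_iff_of_le hv, inj, exists_or, exists_and_left, exists_and_right,
    exists_eq', and_true, true_and, eq_comm]

theorem mem_tk_of_coprime_six_dvd {d : ℕ} (hd : d.Coprime 6) (hd1 : d ≠ 1) (hdw : d ∣ w)
    (hvw : v ≤ w) : (v, w) ∈ Tk k := by
  have not_dvd (a b : ℕ) : ¬ d ∣ 2 ^ a * 3 ^ b := fun h =>
    have h2 : d.Coprime 2 := hd.coprime_dvd_right (by norm_num)
    have h3 : d.Coprime 3 := hd.coprime_dvd_right (by norm_num)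
    hd1 (((h2.pow_right a).mul_right (h3.pow_right b)).eq_one_of_dvd h)
  intro h
  obtain ⟨j, rfl | rfl⟩ := (mem_rk_iff_of_le hvw).1 h
  exacts [not_dvd _ _ hdw, not_dvd _ _ hdw]

theorem exists_mem_rk_mem_rk (k u v : ℕ) : ∃ w, (u, w) ∈ Rk k ∧ (v, w) ∈ Rk k :=
  ⟨2 ^ u * 3 ^ v, Or.inl ⟨v, Or.inl rfl⟩, Or.inl ⟨u, Or.inr rfl⟩⟩

theorem exists_mem_rk_mem_tk (k : ℕ) {u v : ℕ} (huv : u ≠ v) :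
    ∃ w, (u, w) ∈ Rk k ∧ (v, w) ∈ Tk k := by
  refine ⟨2 ^ u * 3 ^ (v + 1), Or.inl ⟨v + 1, Or.inl rfl⟩, fun hv => ?_⟩
  have hle : v ≤ 2 ^ u * 3 ^ (v + 1) := by
    rw [mul_comm]
    exact v.le_succ.trans (lt_pow_self_mul (by norm_num) (by positivity) _).le
  rcases (two_pow_mul_three_pow_mem_rk_iff hle).1 hv with h | h
  exacts [huv h.symm, v.succ_ne_self h.symm]

theorem exists_mem_tk_mem_tk (k u v : ℕ) : ∃ w, (u, w) ∈ Tk k ∧ (v, w) ∈ Tk k := by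
  have mem_tk {x : ℕ} (hx : x ≤ 5 * (u + v)) : (x, 5 * (u + v)) ∈ Tk k :=
    mem_tk_of_coprime_six_dvd (by norm_num) (by norm_num) (dvd_mul_right 5 _) hx
  exact ⟨5 * (u + v), mem_tk (by lia), mem_tk (by lia)⟩

end Rk

/-- For `k ≥ 1`, all distinct `u, v ∈ ℕ` and every choice of
`X, Y ∈ {R_k, T_k}`, there is `w` with `(u,w) ∈ X` and `(v,w) ∈ Y`. -/
theorem stmt_7 (k : ℕ) (hk : 1 ≤ k) (u v : ℕ) (huv : u ≠ v)
    (X Y : Set (ℕ × ℕ)) (hX : X = Rk k ∨ X = Tk k) (hY : Y = Rk k ∨ Y = Tk k) :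
    ∃ w : ℕ, (u, w) ∈ X ∧ (v, w) ∈ Y := by
  rcases hX with rfl | rfl <;> rcases hY with rfl | rfl
  · exact exists_mem_rk_mem_rk k u v
  · exact exists_mem_rk_mem_tk k huv
  · obtain ⟨w, hv, hu⟩ := exists_mem_rk_mem_tk k huv.symm
    exact ⟨w, hu, hv⟩
  · exact exists_mem_tk_mem_tk k u v
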